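/- Projection-error bound: let y, z, w be unit vectors in ℝ^d with yᵀw ≥ zᵀw ≥ 0 and yᵀz ≥ 0. Then for any x ∈ ℝ^d with x = ‖x‖·y one has ‖x − (xᵀz)z‖² = ‖x‖²(1 − (yᵀz)²) ≤ 8‖x‖²(1 − zᵀw) ≤ 8‖x‖²(1 − (zᵀw)²). -/

import Mathlib

open scoped RealInnerProductSpace

/-!
For unit vectors `u`, `v` one has `‖u - v‖² = 2 (1 - ⟪u, v⟫)`, so the inequality
`‖y - z‖² ≤ 2 ‖y - w‖² + 2 ‖z - w‖²`, which by the parallelogram law is `0 ≤ ‖y + z - 2 w‖²`, bounds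
`1 - ⟪y, z⟫` by `2 (1 - ⟪y, w⟫) + 2 (1 - ⟪z, w⟫)`. This is at most `4 (1 - ⟪z, w⟫)` when `w` is at
least as close to `y` as to `z`. The relative squared error of projecting a multiple of `y` onto
the line of `z` is `1 - ⟪y, z⟫ ^ 2`, which is at most `2 (1 - ⟪y, z⟫)`.
-/

section

variable {E : Type*} [SeminormedAddCommGroup E] [InnerProductSpace ℝ E] {x y z w : E}

theorem norm_sub_inner_smul_sq (x : E) (hz : ‖z‖ = 1) :
    ‖x - ⟪x, z⟫ • z‖ ^ 2 = ‖x‖ ^ 2 - ⟪x, z⟫ ^ 2 := by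
  rw [norm_sub_sq_real, norm_smul, inner_smul_right, hz, mul_one, Real.norm_eq_abs, sq_abs]
  ring

theorem inner_sq_eq_norm_sq_mul_inner_sq_of_mem_span_singleton (z : E) (hy : ‖y‖ = 1)
    (hx : x ∈ Submodule.span ℝ {y}) : ⟪x, z⟫ ^ 2 = ‖x‖ ^ 2 * ⟪y, z⟫ ^ 2 := by
  obtain ⟨r, rfl⟩ := Submodule.mem_span_singleton.mp hx
  rw [real_inner_smul_left, norm_smul, hy, mul_one, Real.norm_eq_abs, sq_abs, mul_pow]

theorem real_inner_le_one_of_norm_le_one (hy : ‖y‖ ≤ 1) (hz : ‖z‖ ≤ 1) : ⟪y, z⟫ ≤ 1 :=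
  (real_inner_le_norm y z).trans (mul_le_one₀ hy (norm_nonneg z) hz)

theorem one_sub_inner_le_of_norm_le_one (hy : ‖y‖ ≤ 1) (hz : ‖z‖ ≤ 1) (hw : ‖w‖ ≤ 1) :
    1 - ⟪y, z⟫ ≤ 2 * (1 - ⟪y, w⟫) + 2 * (1 - ⟪z, w⟫) := by
  have expand : ‖y + z - (2 : ℝ) • w‖ ^ 2 =
      ‖y‖ ^ 2 + ‖z‖ ^ 2 + 4 * ‖w‖ ^ 2 + 2 * ⟪y, z⟫ - 4 * (⟪y, w⟫ + ⟪z, w⟫) := by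
    rw [norm_sub_sq_real, norm_add_sq_real, norm_smul, inner_smul_right, inner_add_left,
      Real.norm_two]
    ring
  have hy_sq : ‖y‖ ^ 2 ≤ 1 := pow_le_one₀ (norm_nonneg y) hy
  have hz_sq : ‖z‖ ^ 2 ≤ 1 := pow_le_one₀ (norm_nonneg z) hz
  have hw_sq : ‖w‖ ^ 2 ≤ 1 := pow_le_one₀ (norm_nonneg w) hw
  linarith [sq_nonneg ‖y + z - (2 : ℝ) • w‖]

theorem one_sub_inner_sq_le_of_inner_le_inner (hy : ‖y‖ ≤ 1) (hz : ‖z‖ ≤ 1) (hw : ‖w‖ ≤ 1)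
    (h : ⟪z, w⟫ ≤ ⟪y, w⟫) : 1 - ⟪y, z⟫ ^ 2 ≤ 8 * (1 - ⟪z, w⟫) := by
  calc 1 - ⟪y, z⟫ ^ 2 ≤ 2 * (1 - ⟪y, z⟫) := by linarith [sq_nonneg (1 - ⟪y, z⟫)]
    _ ≤ 2 * (2 * (1 - ⟪y, w⟫) + 2 * (1 - ⟪z, w⟫)) := by
      gcongr
      exact one_sub_inner_le_of_norm_le_one hy hz hw
    _ ≤ 8 * (1 - ⟪z, w⟫) := by linarith

theorem projection_error_bound_general (hy : ‖y‖ = 1) (hz : ‖z‖ = 1) (hw : ‖w‖ ≤ 1)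
    (hzw_le : ⟪z, w⟫ ≤ ⟪y, w⟫) (hzw_nonneg : 0 ≤ ⟪z, w⟫) (hx : x ∈ Submodule.span ℝ {y}) :
    ‖x - ⟪x, z⟫ • z‖ ^ 2 = ‖x‖ ^ 2 * (1 - ⟪y, z⟫ ^ 2) ∧
    ‖x‖ ^ 2 * (1 - ⟪y, z⟫ ^ 2) ≤ 8 * ‖x‖ ^ 2 * (1 - ⟪z, w⟫) ∧
    8 * ‖x‖ ^ 2 * (1 - ⟪z, w⟫) ≤ 8 * ‖x‖ ^ 2 * (1 - ⟪z, w⟫ ^ 2) := by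
  refine ⟨?_, ?_, ?_⟩
  · rw [norm_sub_inner_smul_sq x hz,
      inner_sq_eq_norm_sq_mul_inner_sq_of_mem_span_singleton z hy hx, mul_one_sub]
  · calc ‖x‖ ^ 2 * (1 - ⟪y, z⟫ ^ 2) ≤ ‖x‖ ^ 2 * (8 * (1 - ⟪z, w⟫)) := by
          gcongr
          exact one_sub_inner_sq_le_of_inner_le_inner hy.le hz.le hw hzw_le
      _ = 8 * ‖x‖ ^ 2 * (1 - ⟪z, w⟫) := by ring
  · have hsq : ⟪z, w⟫ ^ 2 ≤ ⟪z, w⟫ :=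
      pow_le_of_le_one hzw_nonneg (real_inner_le_one_of_norm_le_one hz.le hw) two_ne_zero
    gcongr

end

/-- projection-error bound. -/
theorem projection_error_bound
    (d : ℕ) (y z w : EuclideanSpace ℝ (Fin d))
    (hy : ‖y‖ = 1) (hz : ‖z‖ = 1) (hw : ‖w‖ = 1)
    (h1 : ⟪y, w⟫ ≥ ⟪z, w⟫) (h2 : ⟪z, w⟫ ≥ 0) (h3 : ⟪y, z⟫ ≥ 0)
    (x : EuclideanSpace ℝ (Fin d)) (hx : x = ‖x‖ • y) :
    ‖x - ⟪x, z⟫ • z‖ ^ 2 = ‖x‖ ^ 2 * (1 - ⟪y, z⟫ ^ 2) ∧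
    ‖x‖ ^ 2 * (1 - ⟪y, z⟫ ^ 2) ≤ 8 * ‖x‖ ^ 2 * (1 - ⟪z, w⟫) ∧
    8 * ‖x‖ ^ 2 * (1 - ⟪z, w⟫) ≤ 8 * ‖x‖ ^ 2 * (1 - ⟪z, w⟫ ^ 2) :=
  projection_error_bound_general hy hz hw.le h1 h2
    (Submodule.mem_span_singleton.mpr ⟨‖x‖, hx.symm⟩)
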